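/- Let X be a topological space with Lindelöf degree L(X) ≤ κ admitting a base of multiplicity at most 2^κ (every point belongs to at most 2^κ base elements). Then every cover of X by G_κ sets has a subcover of cardinality at most 2^κ; that is, L(X_κ) ≤ 2^κ. -/

import Mathlib

/-!
Choosing a point outside every non-covering union of at most `κ` members of `B` and closing off
under these choices gives a set `Y` of at most `2 ^ κ` points such that at most `κ` members of
`B`, each meeting `Y`, cover `X` as soon as they cover `Y`. Then every point `p` specializes to some
point of `closure Y` (if `X` is T₁, this says that `Y` is dense): otherwise the closed set
`closure Y` is covered by members of `B` that meet `Y` and omit `p`, and at most `κ` of these cover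
`Y`, hence `X`, although they omit `p`.

At most `2 ^ κ` members of `B` meet `Y`, and they contain a local base at every point of
`closure Y`. As `(2 ^ κ) ^ κ = 2 ^ κ`, counting the intersections of at most `κ` of them shows that
at most `2 ^ κ` members of a `G_κ` cover suffice to cover `closure Y`. These cover `X`, because a
`G_κ` set containing `z` contains every point that specializes to `z`.
-/

open Set Cardinal TopologicalSpace

universe u

/-- `G` is a `G_κ` set: an intersection of at most `κ` many open sets. -/
def IsGKappa (κ : Cardinal.{u}) {X : Type u} [TopologicalSpace X] (G : Set X) : Prop :=
  ∃ (ι : Type u) (U : ι → Set X), #ι ≤ κ ∧ (∀ i, IsOpen (U i)) ∧ G = ⋂ i, U i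

open scoped Topology

section Cardinality

variable {κ μ : Cardinal.{u}} {α : Type u}

theorem exists_subset_range_of_mk_le [Nonempty α] {s : Set α} {ι : Type u} (h : #s ≤ #ι) :
    ∃ e : ι → α, s ⊆ range e := by
  obtain ⟨f⟩ := h
  refine ⟨Function.extend f Subtype.val fun _ => Classical.arbitrary α, fun x hx => ?_⟩
  exact ⟨f ⟨x, hx⟩, f.injective.extend_apply _ _ _⟩

theorem two_power_le_of_power_le (hμ : ℵ₀ ≤ μ) (hμκ : μ ^ κ ≤ μ) : 2 ^ κ ≤ μ :=
  (power_le_power_right (ofNat_lt_aleph0.le.trans hμ)).trans hμκ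

theorem mk_setOf_subset_and_mk_le_le (hμ : ℵ₀ ≤ μ) (hμκ : μ ^ κ ≤ μ) {s : Set α} (hs : #s ≤ μ) :
    #{t | t ⊆ s ∧ #t ≤ κ} ≤ μ :=
  (mk_bounded_subset_le s κ).trans ((power_le_power_right (max_le hs hμ)).trans hμκ)

theorem mk_setOf_inter_nonempty_le (hμ : ℵ₀ ≤ μ) {B : Set (Set α)}
    (hB : ∀ x, #{b ∈ B | x ∈ b} ≤ μ) {A : Set α} (hA : #A ≤ μ) :
    #{b ∈ B | (b ∩ A).Nonempty} ≤ μ := by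
  have hsub : {b ∈ B | (b ∩ A).Nonempty} ⊆ ⋃ x ∈ A, {b ∈ B | x ∈ b} := by
    rintro b ⟨hb, x, hxb, hxA⟩
    exact mem_biUnion hxA ⟨hb, hxb⟩
  calc #{b ∈ B | (b ∩ A).Nonempty}
      ≤ #(⋃ x ∈ A, {b ∈ B | x ∈ b}) := mk_le_mk_of_subset hsub
    _ ≤ #A * ⨆ x : A, #{b ∈ B | x.1 ∈ b} := mk_biUnion_le _ _
    _ ≤ μ := mul_le_of_le hμ hA (ciSup_le' fun x => hB x)

/-- The terms built from operations labelled by `J` whose arity is at most `#γ`; an arity is encoded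
as a subset of `γ`. -/
abbrev OperationTree (J γ : Type u) : Type u :=
  WType fun a : J × Set γ => a.2

theorem mk_operationTree_le {J γ : Type u} (hμ : ℵ₀ ≤ μ) (hμγ : μ ^ #γ ≤ μ) (hJ : #J ≤ μ) :
    #(OperationTree J γ) ≤ μ := by
  have hμ0 : μ ≠ 0 := (aleph0_pos.trans_le hμ).ne'
  have hlabels : #(J × Set γ) ≤ μ := by
    rw [mk_prod, lift_id, lift_id, mk_set]
    exact mul_le_of_le hμ hJ (two_power_le_of_power_le hμ hμγ)
  have hbranch (a : J × Set γ) : μ ^ #a.2 ≤ μ :=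
    (power_le_power_left hμ0 (mk_set_le a.2)).trans hμγ
  refine WType.cardinalMk_le_of_le' ?_
  simp only [lift_id]
  calc sum (fun a : J × Set γ => μ ^ #a.2)
      ≤ #(J × Set γ) * ⨆ a : J × Set γ, μ ^ #a.2 := sum_le_mk_mul_iSup _
    _ ≤ μ := mul_le_of_le hμ hlabels (ciSup_le' hbranch)

theorem exists_mk_le_forall_apply_mem (hμ : ℵ₀ ≤ μ) (hμκ : μ ^ κ ≤ μ) {J : Type u} (hJ : #J ≤ μ)
    (F : J → Set α → α) :
    ∃ Y : Set α, #Y ≤ μ ∧ ∀ A ⊆ Y, #A ≤ κ → ∀ j, F j A ∈ Y := by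
  induction κ using Cardinal.inductionOn with | _ γ
  let eval : OperationTree J γ → α := WType.elim α fun t => F t.1.1 (range t.2)
  refine ⟨range eval, mk_range_le.trans (mk_operationTree_le hμ hμκ hJ), ?_⟩
  rintro A hA ⟨f⟩ j
  choose tree htree using fun x : A => hA x.2
  let e : A ≃ range f := Equiv.ofInjective f f.injective
  refine ⟨WType.mk (j, range f) fun k => tree (e.symm k), ?_⟩
  change F j (range fun k => eval (tree (e.symm k))) = F j A
  have hchildren : range (fun k => eval (tree (e.symm k))) = A := by
    simp only [htree]
    exact (e.symm.surjective.range_comp Subtype.val).trans Subtype.range_coe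
  rw [hchildren]

theorem exists_mk_le_forall_apply_subset (hμ : ℵ₀ ≤ μ) (hμκ : μ ^ κ ≤ μ) {Φ : Set α → Set α}
    (hΦ : ∀ A : Set α, #A ≤ κ → #(Φ A) ≤ μ) :
    ∃ Y : Set α, #Y ≤ μ ∧ ∀ A ⊆ Y, #A ≤ κ → Φ A ⊆ Y := by
  rcases isEmpty_or_nonempty α with _ | _
  · exact ⟨∅, by simp, fun A _ _ x => isEmptyElim x⟩
  have henum (A : Set α) (hA : #A ≤ κ) : ∃ e : μ.out → α, Φ A ⊆ range e :=
    exists_subset_range_of_mk_le ((hΦ A hA).trans_eq (mk_out μ).symm)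
  choose! e he using henum
  obtain ⟨Y, hY, hclosed⟩ := exists_mk_le_forall_apply_mem hμ hμκ (mk_out μ).le fun j A => e A j
  exact ⟨Y, hY, fun A hAY hA =>
    (he A hA).trans (range_subset_iff.2 (hclosed A hAY hA))⟩

theorem exists_mk_le_forall_sUnion_eq_univ (hμ : ℵ₀ ≤ μ) (hμκ : μ ^ κ ≤ μ) {B : Set (Set α)}
    (hB : ∀ x, #{b ∈ B | x ∈ b} ≤ μ) :
    ∃ Y : Set α, #Y ≤ μ ∧ ∀ W ⊆ {b ∈ B | (b ∩ Y).Nonempty}, #W ≤ κ →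
      Y ⊆ ⋃₀ W → ⋃₀ W = Set.univ := by
  rcases isEmpty_or_nonempty α with _ | _
  · exact ⟨∅, by simp, fun _ _ _ _ => Subsingleton.elim _ _⟩
  have hmissed (V : Set α) (hV : V ≠ Set.univ) : ∃ x, x ∉ V := (ne_univ_iff_exists_notMem V).1 hV
  choose! missed hmissed using hmissed
  let 𝒲 (A : Set α) : Set (Set (Set α)) := {W | W ⊆ {b ∈ B | (b ∩ A).Nonempty} ∧ #W ≤ κ}
  have hκμ : κ ≤ μ := (cantor κ).le.trans (two_power_le_of_power_le hμ hμκ)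
  have h𝒲 (A : Set α) (hA : #A ≤ κ) : #(𝒲 A) ≤ μ :=
    mk_setOf_subset_and_mk_le_le hμ hμκ (mk_setOf_inter_nonempty_le hμ hB (hA.trans hκμ))
  obtain ⟨Y, hY, hclosed⟩ := exists_mk_le_forall_apply_subset hμ hμκ
    (Φ := fun A => (fun W => missed (⋃₀ W)) '' 𝒲 A) fun A hA =>
      mk_image_le.trans (h𝒲 A hA)
  refine ⟨Y, hY, fun W hWB hW hYW => ?_⟩
  by_contra hne
  choose point hpoint using fun b : W => (hWB b.2).2
  have hW𝒲 : W ∈ 𝒲 (range point) :=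
    ⟨fun b hb => ⟨(hWB hb).1, point ⟨b, hb⟩, (hpoint ⟨b, hb⟩).1, mem_range_self _⟩, hW⟩
  have hmem : missed (⋃₀ W) ∈ Y :=
    hclosed _ (range_subset_iff.2 fun b => (hpoint b).2) (mk_range_le.trans hW) ⟨W, hW𝒲, rfl⟩
  exact hmissed _ hne (hYW hmem)

theorem exists_subset_mk_le_forall_sInter_subset (hμ : ℵ₀ ≤ μ) (hμκ : μ ^ κ ≤ μ)
    {C : Set (Set α)} (hC : #C ≤ μ) (𝒰 : Set (Set α)) :
    ∃ 𝒱 ⊆ 𝒰, #𝒱 ≤ μ ∧ ∀ F ⊆ C, #F ≤ κ → ∀ U ∈ 𝒰, ⋂₀ F ⊆ U → ∃ V ∈ 𝒱, ⋂₀ F ⊆ V := by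
  let 𝓕 : Set (Set (Set α)) := {F | (F ⊆ C ∧ #F ≤ κ) ∧ ∃ U ∈ 𝒰, ⋂₀ F ⊆ U}
  have h𝓕 : #𝓕 ≤ μ :=
    (mk_le_mk_of_subset fun _ hF => hF.1).trans (mk_setOf_subset_and_mk_le_le hμ hμκ hC)
  choose V hV𝒰 hV using fun F : 𝓕 => F.2.2
  refine ⟨range V, range_subset_iff.2 hV𝒰, mk_range_le.trans h𝓕, fun F hFC hF U hU hFU => ?_⟩
  exact ⟨_, mem_range_self ⟨F, ⟨hFC, hF⟩, U, hU, hFU⟩, hV ⟨F, _⟩⟩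

end Cardinality

section Topology

variable {κ μ : Cardinal.{u}} {X : Type u} [TopologicalSpace X]

/-- Every cover of `s` by open sets of the ambient space has a subcover of cardinality at most `κ`.
For `s = univ` and `κ` infinite this says `L(X) ≤ κ`. -/
def IsCardLindelof (κ : Cardinal.{u}) (s : Set X) : Prop :=
  ∀ 𝒰 : Set (Set X), (∀ u ∈ 𝒰, IsOpen u) → s ⊆ ⋃₀ 𝒰 → ∃ 𝒱 ⊆ 𝒰, #𝒱 ≤ κ ∧ s ⊆ ⋃₀ 𝒱

theorem isCardLindelof_univ_iff :
    IsCardLindelof κ (Set.univ : Set X) ↔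
      ∀ 𝒰 : Set (Set X), (∀ u ∈ 𝒰, IsOpen u) → ⋃₀ 𝒰 = Set.univ →
        ∃ 𝒱 ⊆ 𝒰, #𝒱 ≤ κ ∧ ⋃₀ 𝒱 = Set.univ := by
  simp only [IsCardLindelof, univ_subset_iff]

theorem IsCardLindelof.of_isClosed_subset {s t : Set X} (hs : IsCardLindelof κ s)
    (ht : IsClosed t) (hts : t ⊆ s) : IsCardLindelof κ t := by
  intro 𝒰 h𝒰 ht𝒰
  have hcover : s ⊆ ⋃₀ insert tᶜ 𝒰 := by
    rw [sUnion_insert, ← inter_subset]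
    exact inter_subset_right.trans ht𝒰
  obtain ⟨𝒱, h𝒱, h𝒱κ, hs𝒱⟩ := hs (insert tᶜ 𝒰) (forall_mem_insert.2 ⟨ht.isOpen_compl, h𝒰⟩) hcover
  refine ⟨𝒱 ∩ 𝒰, inter_subset_right, (mk_le_mk_of_subset inter_subset_left).trans h𝒱κ, ?_⟩
  intro x hx
  obtain ⟨v, hv, hxv⟩ := hs𝒱 (hts hx)
  exact ⟨v, ⟨hv, (h𝒱 hv).resolve_left fun h => (h ▸ hxv) hx⟩, hxv⟩

theorem IsGKappa.mem_of_specializes {G : Set X} (hG : IsGKappa κ G) {x z : X} (hxz : x ⤳ z)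
    (hz : z ∈ G) : x ∈ G := by
  obtain ⟨ι, O, -, hO, rfl⟩ := hG
  exact mem_iInter.2 fun i => hxz.mem_open (hO i) (mem_iInter.1 hz i)

theorem IsGKappa.exists_sInter_subset {G : Set X} (hG : IsGKappa κ G) {B : Set (Set X)}
    (hB : IsTopologicalBasis B) {z : X} (hz : z ∈ G) :
    ∃ F ⊆ B, #F ≤ κ ∧ z ∈ ⋂₀ F ∧ ⋂₀ F ⊆ G := by
  obtain ⟨ι, O, hι, hO, rfl⟩ := hG
  choose b hbB hzb hbO using fun i =>
    hB.exists_subset_of_mem_open (mem_iInter.1 hz i) (hO i)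
  refine ⟨range b, range_subset_iff.2 hbB, mk_range_le.trans hι, ?_, ?_⟩
  · rw [sInter_range]
    exact mem_iInter.2 hzb
  · rw [sInter_range]
    exact iInter_mono hbO

theorem exists_mk_le_forall_exists_mem_closure_specializes (hμ : ℵ₀ ≤ μ) (hμκ : μ ^ κ ≤ μ)
    (hX : IsCardLindelof κ (Set.univ : Set X)) {B : Set (Set X)} (hB : IsTopologicalBasis B)
    (hmult : ∀ x, #{b ∈ B | x ∈ b} ≤ μ) :
    ∃ Y : Set X, #Y ≤ μ ∧ ∀ x, ∃ z ∈ closure Y, x ⤳ z := by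
  obtain ⟨Y, hY, hYuniv⟩ := exists_mk_le_forall_sUnion_eq_univ hμ hμκ hmult
  refine ⟨Y, hY, fun x => ?_⟩
  by_contra! hx
  let 𝒜 : Set (Set X) := {b ∈ B | (b ∩ Y).Nonempty ∧ x ∉ b}
  have h𝒜 : closure Y ⊆ ⋃₀ 𝒜 := by
    intro z hz
    obtain ⟨b, ⟨hb, hzb⟩, hxb⟩ : ∃ b, (b ∈ B ∧ z ∈ b) ∧ x ∉ b := by
      simpa only [hB.nhds_hasBasis.specializes_iff, not_forall, exists_prop] using hx z hz
    exact ⟨b, ⟨hb, mem_closure_iff.1 hz b (hB.isOpen hb) hzb, hxb⟩, hzb⟩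
  obtain ⟨W, hW𝒜, hW, hYW⟩ := hX.of_isClosed_subset isClosed_closure (subset_univ _) 𝒜
    (fun b hb => hB.isOpen hb.1) h𝒜
  have hWuniv : ⋃₀ W = Set.univ :=
    hYuniv W (fun b hb => ⟨(hW𝒜 hb).1, (hW𝒜 hb).2.1⟩) hW (subset_closure.trans hYW)
  obtain ⟨b, hb, hxb⟩ := sUnion_eq_univ_iff.1 hWuniv x
  exact (hW𝒜 hb).2.2 hxb

theorem exists_subset_mk_le_closure_subset_sUnion (hμ : ℵ₀ ≤ μ) (hμκ : μ ^ κ ≤ μ)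
    {B : Set (Set X)} (hB : IsTopologicalBasis B) (hmult : ∀ x, #{b ∈ B | x ∈ b} ≤ μ)
    {Y : Set X} (hY : #Y ≤ μ) {𝒰 : Set (Set X)} (h𝒰 : ∀ u ∈ 𝒰, IsGKappa κ u)
    (hcov : closure Y ⊆ ⋃₀ 𝒰) :
    ∃ 𝒱 ⊆ 𝒰, #𝒱 ≤ μ ∧ closure Y ⊆ ⋃₀ 𝒱 := by
  obtain ⟨𝒱, h𝒱𝒰, h𝒱, hselect⟩ := exists_subset_mk_le_forall_sInter_subset hμ hμκ
    (mk_setOf_inter_nonempty_le hμ hmult hY) 𝒰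
  refine ⟨𝒱, h𝒱𝒰, h𝒱, fun z hz => ?_⟩
  obtain ⟨U, hU, hzU⟩ := hcov hz
  obtain ⟨F, hFB, hF, hzF, hFU⟩ := (h𝒰 U hU).exists_sInter_subset hB hzU
  have hFY : F ⊆ {b ∈ B | (b ∩ Y).Nonempty} := fun b hb =>
    ⟨hFB hb, mem_closure_iff.1 hz b (hB.isOpen (hFB hb)) (hzF b hb)⟩
  obtain ⟨V, hV, hFV⟩ := hselect F hFY hF U hU hFU
  exact ⟨V, hV, hFV hzF⟩

theorem lindelof_G_kappa_of_base_multiplicity_general (hμ : ℵ₀ ≤ μ) (hμκ : μ ^ κ ≤ μ)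
    (hX : IsCardLindelof κ (Set.univ : Set X)) {B : Set (Set X)} (hB : IsTopologicalBasis B)
    (hmult : ∀ x, #{b ∈ B | x ∈ b} ≤ μ) {𝒰 : Set (Set X)} (h𝒰 : ∀ u ∈ 𝒰, IsGKappa κ u)
    (hcov : ⋃₀ 𝒰 = Set.univ) :
    ∃ 𝒱 ⊆ 𝒰, #𝒱 ≤ μ ∧ ⋃₀ 𝒱 = Set.univ := by
  obtain ⟨Y, hY, hspec⟩ :=
    exists_mk_le_forall_exists_mem_closure_specializes hμ hμκ hX hB hmult
  obtain ⟨𝒱, h𝒱𝒰, h𝒱, hY𝒱⟩ := exists_subset_mk_le_closure_subset_sUnion hμ hμκ hB hmult hY h𝒰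
    (hcov ▸ subset_univ _)
  refine ⟨𝒱, h𝒱𝒰, h𝒱, sUnion_eq_univ_iff.2 fun x => ?_⟩
  obtain ⟨z, hz, hxz⟩ := hspec x
  obtain ⟨V, hV, hzV⟩ := hY𝒱 hz
  exact ⟨V, hV, (h𝒰 V (h𝒱𝒰 hV)).mem_of_specializes hxz hzV⟩

end Topology

/-- Let `X` be a space with Lindelöf degree at most `κ` admitting a base of multiplicity at
most `2^κ` (every point belongs to at most `2^κ` base elements). Then every cover of `X` by
`G_κ` sets has a subcover of cardinality at most `2^κ`, i.e. `L(X_κ) ≤ 2^κ`. -/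
theorem lindelof_G_kappa_of_base_multiplicity
    (κ : Cardinal.{u}) (hκ : ℵ₀ ≤ κ)
    (X : Type u) [TopologicalSpace X]
    (hL : ∀ 𝒰 : Set (Set X), (∀ u ∈ 𝒰, IsOpen u) → ⋃₀ 𝒰 = Set.univ →
      ∃ 𝒱 ⊆ 𝒰, #𝒱 ≤ κ ∧ ⋃₀ 𝒱 = Set.univ)
    (B : Set (Set X)) (hB : IsTopologicalBasis B)
    (hmult : ∀ x : X, #{b ∈ B | x ∈ b} ≤ 2 ^ κ)
    (𝒰 : Set (Set X)) (h𝒰 : ∀ u ∈ 𝒰, IsGKappa κ u) (hcov : ⋃₀ 𝒰 = Set.univ) :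
    ∃ 𝒱 ⊆ 𝒰, #𝒱 ≤ 2 ^ κ ∧ ⋃₀ 𝒱 = Set.univ :=
  lindelof_G_kappa_of_base_multiplicity_general (hκ.trans (cantor κ).le)
    (by rw [← power_mul, mul_eq_self hκ]) (isCardLindelof_univ_iff.2 hL) hB hmult h𝒰 hcov
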